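/- Let ε > 0, b > 0, and let ξ ∈ (0, ξ₀) be such that the point c = (0, bε, 0) satisfies d_g(u, c) = bε √((1 + ξ)² a²/b² + 1), where u = (0, 0, aε). Set v = (0, 0, −aε), w = (aε(1 + ξ), 0, 0), and p = (−aε(1 + ξ), 0, 0). Then both c and −c = (0, −bε, 0) are equidistant in the geodesic distance from all four points: d_g(c, u) = d_g(c, v) = d_g(c, w) = d_g(c, p), and d_g(−c, u) = d_g(−c, v) = d_g(−c, w) = d_g(−c, p); that is, the tetrahedron {u, v, w, p} has the two distinct circumcentres c and −c. -/

import Mathlib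

open Real MeasureTheory

noncomputable section

/-- `ℝ³` with the Euclidean norm. -/
abbrev E3 : Type := EuclideanSpace ℝ (Fin 3)

/-- The bump function `f(y) = A (1 + cos (π y))`. -/
def f (A y : ℝ) : ℝ := A * (1 + Real.cos (Real.pi * y))

/-- The g-length of a path `γ` in the perturbed metric:
`L_g(γ) = ∫₀¹ √(γ₁′(t)² + γ₂′(t)² + (1 + f(γ₂(t))) γ₃′(t)²) dt`. -/
def Lg (A : ℝ) (γ : ℝ → E3) : ℝ :=
  ∫ t in (0:ℝ)..1,
    Real.sqrt ((deriv γ t 0) ^ 2 + (deriv γ t 1) ^ 2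
      + (1 + f A (γ t 1)) * (deriv γ t 2) ^ 2)

/-- The geodesic distance: the infimum of g-lengths of C¹ paths from `p` to `q`. -/
def dg (A : ℝ) (p q : E3) : ℝ :=
  sInf {L : ℝ | ∃ γ : ℝ → E3,
    ContDiff ℝ 1 γ ∧ γ 0 = p ∧ γ 1 = q ∧ L = Lg A γ}

/-- A point of `ℝ³` from its three coordinates. -/
def pt (x y z : ℝ) : E3 := (EuclideanSpace.equiv (Fin 3) ℝ).symm ![x, y, z]

/-- `a = 1/√2`. -/
def a : ℝ := 1 / Real.sqrt 2

/-- `ξ₀ = √(1 + f(0)) − 1`. -/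
def ξ₀ (A : ℝ) : ℝ := Real.sqrt (1 + f A 0) - 1

def TT (s : Fin 3 → ℝ) : E3 →L[ℝ] E3 :=
  ((EuclideanSpace.equiv (Fin 3) ℝ).symm : (Fin 3 → ℝ) →L[ℝ] E3).comp
    (ContinuousLinearMap.pi (fun i => s i • (EuclideanSpace.proj i : E3 →L[ℝ] ℝ)))

lemma TT_apply (s : Fin 3 → ℝ) (x : E3) (i : Fin 3) : TT s x i = s i * x i := by
  simp [TT]

lemma f_even (A y : ℝ) : f A (-y) = f A y := by
  simp [f]

lemma f_nonneg' (A y : ℝ) (hA : 0 < A) : 0 ≤ f A y := by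
  unfold f
  have := Real.neg_one_le_cos (Real.pi * y)
  apply mul_nonneg hA.le; linarith

lemma Lg_TT (A : ℝ) (s : Fin 3 → ℝ) (hs : ∀ i, s i = 1 ∨ s i = -1) (γ : ℝ → E3)
    (hγ : ContDiff ℝ 1 γ) : Lg A (fun t => TT s (γ t)) = Lg A γ := by
  unfold Lg
  congr 1
  funext t
  have hd : deriv (fun t => TT s (γ t)) t = TT s (deriv γ t) :=
    ((TT s).hasFDerivAt.comp_hasDerivAt t
      ((hγ.differentiable (by norm_num)) t).hasDerivAt).deriv
  have hsq : ∀ i, (s i) ^ 2 = 1 := by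
    intro i; rcases hs i with h | h <;> rw [h] <;> norm_num
  have hf : f A (s 1 * γ t 1) = f A (γ t 1) := by
    rcases hs 1 with h | h <;> rw [h]
    · rw [one_mul]
    · rw [neg_one_mul, f_even]
  rw [hd]
  simp only [TT_apply, mul_pow, hsq, hf, one_mul]

lemma TT_TT (s : Fin 3 → ℝ) (hs : ∀ i, s i = 1 ∨ s i = -1) (x : E3) :
    TT s (TT s x) = x := by
  ext i
  rw [TT_apply, TT_apply]
  rcases hs i with h | h <;> rw [h] <;> ring

lemma dg_TT (A : ℝ) (s : Fin 3 → ℝ) (hs : ∀ i, s i = 1 ∨ s i = -1) (p q : E3) :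
    dg A (TT s p) (TT s q) = dg A p q := by
  unfold dg
  congr 1
  ext L
  constructor
  · rintro ⟨γ, h1, h2, h3, h4⟩
    refine ⟨fun t => TT s (γ t), (TT s).contDiff.comp h1, ?_, ?_, ?_⟩
    · simp only [h2, TT_TT s hs]
    · simp only [h3, TT_TT s hs]
    · rw [h4, Lg_TT A s hs γ h1]
  · rintro ⟨γ, h1, h2, h3, h4⟩
    refine ⟨fun t => TT s (γ t), (TT s).contDiff.comp h1, ?_, ?_, ?_⟩
    · simp only [h2]
    · simp only [h3]
    · rw [h4, Lg_TT A s hs γ h1]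

lemma Lg_rev (A : ℝ) (γ : ℝ → E3) : Lg A (fun t => γ (1 - t)) = Lg A γ := by
  unfold Lg
  have := intervalIntegral.integral_comp_sub_left (a := 0) (b := 1) (fun t =>
    Real.sqrt ((deriv γ t 0) ^ 2 + (deriv γ t 1) ^ 2
      + (1 + f A (γ t 1)) * (deriv γ t 2) ^ 2)) 1
  rw [sub_self, sub_zero] at this
  rw [← this]
  congr 1
  funext t
  rw [deriv_comp_const_sub]
  simp

lemma dg_symm_le (A : ℝ) (p q : E3) :
    {L : ℝ | ∃ γ : ℝ → E3, ContDiff ℝ 1 γ ∧ γ 0 = p ∧ γ 1 = q ∧ L = Lg A γ} ⊆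
    {L : ℝ | ∃ γ : ℝ → E3, ContDiff ℝ 1 γ ∧ γ 0 = q ∧ γ 1 = p ∧ L = Lg A γ} := by
  rintro L ⟨γ, h1, h2, h3, h4⟩
  refine ⟨fun t => γ (1 - t), h1.comp (by fun_prop), ?_, ?_, ?_⟩
  · simp [h3]
  · simp [h2]
  · rw [h4, Lg_rev]

lemma dg_symm' (A : ℝ) (p q : E3) : dg A p q = dg A q p := by
  unfold dg
  congr 1
  exact Set.Subset.antisymm (dg_symm_le A p q) (dg_symm_le A q p)

lemma norm_le_Lg (A : ℝ) (hA : 0 < A) (γ : ℝ → E3) (hγ : ContDiff ℝ 1 γ) :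
    ‖γ 1 - γ 0‖ ≤ Lg A γ := by
  have hdc : Continuous (deriv γ) := hγ.continuous_deriv (by norm_num)
  have hc := hγ.continuous
  have h1 : ∫ t in (0:ℝ)..1, deriv γ t = γ 1 - γ 0 :=
    intervalIntegral.integral_deriv_eq_sub
      (fun x _ => (hγ.differentiable (by norm_num)) x) (hdc.intervalIntegrable _ _)
  rw [← h1]
  refine (intervalIntegral.norm_integral_le_integral_norm zero_le_one).trans ?_
  unfold Lg
  apply intervalIntegral.integral_mono_on zero_le_one
  · exact hdc.norm.intervalIntegrable _ _
  · apply Continuous.intervalIntegrable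
    unfold f
    fun_prop
  · intro t _
    rw [EuclideanSpace.norm_eq]
    apply Real.sqrt_le_sqrt
    simp only [Fin.sum_univ_three, Real.norm_eq_abs, sq_abs]
    nlinarith [f_nonneg' A (γ t 1) hA, sq_nonneg (deriv γ t 2),
      mul_nonneg (f_nonneg' A (γ t 1) hA) (sq_nonneg (deriv γ t 2))]

lemma dg_flat (A : ℝ) (hA : 0 < A) (p q : E3) (h : p 2 = q 2) : dg A p q = ‖q - p‖ := by
  have hmem : ‖q - p‖ ∈ {L : ℝ | ∃ γ : ℝ → E3,
      ContDiff ℝ 1 γ ∧ γ 0 = p ∧ γ 1 = q ∧ L = Lg A γ} := by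
    refine ⟨fun t => p + t • (q - p), by fun_prop, by simp, by simp, ?_⟩
    have hd : ∀ t : ℝ, deriv (fun t : ℝ => p + t • (q - p)) t = q - p := by
      intro t
      have := ((hasDerivAt_id t).smul_const (q - p)).const_add p
      simpa using this.deriv
    unfold Lg
    simp only [hd]
    rw [EuclideanSpace.norm_eq]
    simp [Fin.sum_univ_three, h]
  apply le_antisymm
  · apply csInf_le _ hmem
    refine ⟨0, ?_⟩
    rintro L ⟨γ, h1, h2, h3, rfl⟩
    exact (norm_nonneg _).trans (norm_le_Lg A hA γ h1)
  · apply le_csInf ⟨_, hmem⟩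
    rintro L ⟨γ, h1, h2, h3, rfl⟩
    rw [← h2, ← h3]
    exact norm_le_Lg A hA γ h1

lemma TT_pt (s : Fin 3 → ℝ) (x y z : ℝ) :
    TT s (pt x y z) = pt (s 0 * x) (s 1 * y) (s 2 * z) := by
  ext i
  rw [TT_apply]
  fin_cases i <;> simp [pt]

lemma dg_pt (A : ℝ) (s0 s1 s2 : ℝ) (h0 : s0 = 1 ∨ s0 = -1) (h1 : s1 = 1 ∨ s1 = -1)
    (h2 : s2 = 1 ∨ s2 = -1) (x y z x' y' z' : ℝ) :
    dg A (pt (s0 * x) (s1 * y) (s2 * z)) (pt (s0 * x') (s1 * y') (s2 * z'))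
      = dg A (pt x y z) (pt x' y' z') := by
  have := dg_TT A ![s0, s1, s2] (by intro i; fin_cases i <;> simpa) (pt x y z) (pt x' y' z')
  simpa [TT_pt] using this

lemma dg_flat_pt (A : ℝ) (hA : 0 < A) (x y x' y' : ℝ) :
    dg A (pt x y 0) (pt x' y' 0) = Real.sqrt ((x' - x) ^ 2 + (y' - y) ^ 2) := by
  rw [dg_flat A hA _ _ (by simp [pt]), EuclideanSpace.norm_eq]
  simp [Fin.sum_univ_three, pt]

/-- If `ξ ∈ (0, ξ₀)` is such that `c = (0,bε,0)` satisfies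
`d_g(u, c) = bε √((1 + ξ)² a²/b² + 1)`, then both `c` and `−c` are equidistant
(in the geodesic distance) from the four vertices `u, v, w, p` of the
tetrahedron: the tetrahedron has the two distinct circumcentres `c` and `−c`. -/
theorem two_circumcentres (A : ℝ) (hA0 : 0 < A) (hA : A ≤ 3 / 8)
    (ε b ξ : ℝ) (hε : 0 < ε) (hb : 0 < b) (hξ0 : 0 < ξ) (hξ1 : ξ < ξ₀ A)
    (hc : dg A (pt 0 0 (a * ε)) (pt 0 (b * ε) 0)
        = b * ε * Real.sqrt ((1 + ξ) ^ 2 * a ^ 2 / b ^ 2 + 1)) :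
    (dg A (pt 0 (b * ε) 0) (pt 0 0 (a * ε))
        = dg A (pt 0 (b * ε) 0) (pt 0 0 (-(a * ε))) ∧
      dg A (pt 0 (b * ε) 0) (pt 0 0 (-(a * ε)))
        = dg A (pt 0 (b * ε) 0) (pt (a * ε * (1 + ξ)) 0 0) ∧
      dg A (pt 0 (b * ε) 0) (pt (a * ε * (1 + ξ)) 0 0)
        = dg A (pt 0 (b * ε) 0) (pt (-(a * ε * (1 + ξ))) 0 0)) ∧
    (dg A (pt 0 (-(b * ε)) 0) (pt 0 0 (a * ε))
        = dg A (pt 0 (-(b * ε)) 0) (pt 0 0 (-(a * ε))) ∧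
      dg A (pt 0 (-(b * ε)) 0) (pt 0 0 (-(a * ε)))
        = dg A (pt 0 (-(b * ε)) 0) (pt (a * ε * (1 + ξ)) 0 0) ∧
      dg A (pt 0 (-(b * ε)) 0) (pt (a * ε * (1 + ξ)) 0 0)
        = dg A (pt 0 (-(b * ε)) 0) (pt (-(a * ε * (1 + ξ))) 0 0)) := by
  have hcu := hc
  rw [dg_symm'] at hcu
  have hbe : 0 < b * ε := mul_pos hb hε
  have key : b * ε * Real.sqrt ((1 + ξ) ^ 2 * a ^ 2 / b ^ 2 + 1)
      = Real.sqrt ((a * ε * (1 + ξ)) ^ 2 + (b * ε) ^ 2) := by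
    have e : (a * ε * (1 + ξ)) ^ 2 + (b * ε) ^ 2
        = (b * ε) ^ 2 * ((1 + ξ) ^ 2 * a ^ 2 / b ^ 2 + 1) := by
      field_simp
    rw [e, Real.sqrt_mul (sq_nonneg _), Real.sqrt_sq hbe.le]
  rw [key] at hcu
  have r1 := dg_pt A 1 1 (-1) (by simp) (by simp) (by simp) 0 (b * ε) 0 0 0 (a * ε)
  have r2 := dg_pt A 1 (-1) 1 (by simp) (by simp) (by simp) 0 (b * ε) 0 0 0 (a * ε)
  have r3 := dg_pt A 1 (-1) (-1) (by simp) (by simp) (by simp) 0 (b * ε) 0 0 0 (a * ε)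
  simp only [one_mul, neg_one_mul, neg_zero] at r1 r2 r3
  rw [r1, r2, r3, hcu]
  simp only [dg_flat_pt A hA0, sub_zero, zero_sub, neg_sq, neg_neg, and_self]
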